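/- For every dimension d ≥ 1, every α ∈ [0,1), every η ∈ {−1,0,+1}^d and every p ∈ [0,1], the probability of existence of an open Lipschitz surface above the tilted plane satisfies the zero-one law P_p(LIP^{α,d}_η) ∈ {0,1}. -/

import Mathlib

open MeasureTheory Filter ENNReal

/-- Sites of `ℤ^{d+1}`. -/
abbrev Site (d : ℕ) := Fin (d + 1) → ℤ

/-- Site-percolation configurations on `ℤ^{d+1}`: a site is open iff its value is `true`. -/
abbrev Config (d : ℕ) := Site d → Bool

/-- `P` is the i.i.d. Bernoulli(`p`) product measure on `{0,1}^ι`: it is a probability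
measure whose cylinder events have the correct product probabilities. -/
def IsBernoulli {ι : Type*} (p : ℝ) (P : Measure (ι → Bool)) : Prop :=
  IsProbabilityMeasure P ∧
    ∀ (s : Finset ι) (f : ι → Bool),
      P {ω | ∀ x ∈ s, ω x = f x} =
        ∏ x ∈ s, (if f x then ENNReal.ofReal p else ENNReal.ofReal (1 - p))

/-- A function `F : ℤ^d → ℤ` is Lipschitz: `‖x − y‖₁ = 1 → |F x − F y| ≤ 1`. -/
def IsLipschitzFn {d : ℕ} (F : (Fin d → ℤ) → ℤ) : Prop :=
  ∀ x y : Fin d → ℤ, (∑ i, |x i - y i|) = 1 → |F x - F y| ≤ 1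

/-- Height `⌊α ∑ᵢ ηᵢ xᵢ⌋` of the tilted plane `L^{α,d}_η` above `x ∈ ℤ^d`. -/
noncomputable def planeHt (α : ℝ) {d : ℕ} (η x : Fin d → ℤ) : ℤ :=
  ⌊α * ∑ i, (η i : ℝ) * (x i : ℝ)⌋

/-- `η ∈ {-1,0,1}^d`. -/
def IsSign {d : ℕ} (η : Fin d → ℤ) : Prop := ∀ i, η i = -1 ∨ η i = 0 ∨ η i = 1

/-- The event `LIP^{α,d}_η` that there is an open Lipschitz surface lying (strictly) above
the tilted plane `L^{α,d}_η`. -/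
def LIP (α : ℝ) {d : ℕ} (η : Fin d → ℤ) : Set (Config d) :=
  {ω | ∃ F : (Fin d → ℤ) → ℤ, IsLipschitzFn F ∧
    ∀ x : Fin d → ℤ, ω (Fin.snoc x (F x)) = true ∧ planeHt α η x < F x}

/-- `pc` is the critical probability `p_L(α,d,η)` of Lipschitz percolation above the tilted
plane `L^{α,d}_η`: `pc ∈ (0,1)`, for `p` below it there is `P_p`-a.s. no open Lipschitz
surface above the plane, and for `p` above it there `P_p`-a.s. is one.
(Here `P p` is the Bernoulli(`p`) product measure on `{0,1}^{ℤ^{d+1}}`.) -/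
def IsCriticalProb {d : ℕ} (P : ℝ → Measure (Config d)) (α : ℝ) (η : Fin d → ℤ)
    (pc : ℝ) : Prop :=
  pc ∈ Set.Ioo (0 : ℝ) 1 ∧
    (∀ p, 0 ≤ p → p < pc → P p (LIP α η) = 0) ∧
    (∀ p, pc < p → p ≤ 1 → P p (LIP α η) = 1)

/-- The canonical direction vector `η ∈ {-1,0,1}^d` with `k` entries equal to `1`; the
critical probability `p_L(α,d,η)` depends on `η` only through `k = ‖η‖₁`, and
`p_L(α,d,k)` denotes the common value. -/
def etaK (d k : ℕ) : Fin d → ℤ := fun i => if (i : ℕ) < k then 1 else 0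

/-!
Let `A n` be the event that there is an open Lipschitz surface above the tilted plane raised by `n`.
The events `A n` decrease, and they all have the same probability because the product measure is
invariant under vertical translations; hence `P (A 0) = P (⋂ n, A n)`. Changing finitely many sites
does not affect `⋂ n, A n`: a surface above a sufficiently high plane avoids all of them. So
`⋂ n, A n` is a tail event, and Kolmogorov's zero-one law applies. Measurability holds because
`A n` is the projection of a closed set of pairs (configuration, surface), and the surfaces with a
given height at the origin lie in a compact set.
-/

open ProbabilityTheory

lemma bernoulliMeasure_true_false_singleton (p : unitInterval) (b : Bool) :
    bernoulliMeasure true false p {b} =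
      if b then ENNReal.ofReal p else ENNReal.ofReal (1 - p) := by
  cases b <;> simp [← ENNReal.ofReal_coe_nnreal]

section ProductMeasure

variable {ι : Type*} {X : ι → Type*} [∀ i, MeasurableSpace (X i)]

lemma eq_infinitePi_of_countable [∀ i, Countable (X i)] [∀ i, MeasurableSingletonClass (X i)]
    (μ : ∀ i, Measure (X i)) [∀ i, IsProbabilityMeasure (μ i)] {ν : Measure (∀ i, X i)}
    (hν : ∀ (s : Finset ι) (f : ∀ i, X i), ν {ω | ∀ i ∈ s, ω i = f i} = ∏ i ∈ s, μ i {f i}) :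
    ν = Measure.infinitePi μ := by
  have (i : ι) : Nonempty (X i) := nonempty_of_isProbabilityMeasure (μ i)
  refine IsProjectiveLimit.unique (fun s ↦ Measure.ext_of_singleton fun a ↦ ?_)
    (Measure.isProjectiveLimit_infinitePi μ)
  obtain ⟨f, rfl⟩ := Subtype.surjective_restrict _ a
  have hcylinder : s.restrict ⁻¹' {s.restrict f} = {ω | ∀ i ∈ s, ω i = f i} := by
    ext ω
    simp [funext_iff]
  calc ν.map s.restrict {s.restrict f} = ν {ω | ∀ i ∈ s, ω i = f i} := by
        rw [Measure.map_apply (Finset.measurable_restrict s) (measurableSet_singleton _), hcylinder]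
    _ = ∏ i : s, μ i {f i} := by rw [hν, Finset.prod_coe_sort s fun i ↦ μ i {f i}]
    _ = Measure.pi (fun i : s ↦ μ i) {s.restrict f} := (Measure.pi_singleton _ _).symm

lemma IsBernoulli.eq_infinitePi {p : ℝ} {P : Measure (ι → Bool)} (hP : IsBernoulli p P)
    (hp : p ∈ Set.Icc (0 : ℝ) 1) :
    P = Measure.infinitePi fun _ ↦ bernoulliMeasure true false ⟨p, hp⟩ :=
  eq_infinitePi_of_countable _ fun s f ↦ by
    simp_rw [hP.2, bernoulliMeasure_true_false_singleton]

lemma measurableSet_cylinderEvents_of_dependsOn {S : Set ι} {A : Set (∀ i, X i)}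
    (hA : MeasurableSet A) (hS : DependsOn (· ∈ A) S) : MeasurableSet[cylinderEvents S] A := by
  classical
  obtain rfl | ⟨a, -⟩ := A.eq_empty_or_nonempty
  · exact @MeasurableSet.empty _ (cylinderEvents S)
  have hmeas : Measurable[cylinderEvents S] fun ω ↦ S.piecewise ω a := by
    refine @measurable_pi_lambda _ _ _ (cylinderEvents S) _ _ fun i ↦ ?_
    by_cases hi : i ∈ S
    · simpa [hi] using measurable_cylinderEvent_apply hi
    · simp [hi]
  have hpre : (fun ω ↦ S.piecewise ω a) ⁻¹' A = A :=
    Set.ext fun ω ↦ iff_of_eq (hS fun i hi ↦ S.piecewise_eq_of_mem ω a hi)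
  exact hpre ▸ hmeas hA

lemma measure_zero_or_one_of_dependsOn_compl_finite {P : Measure (∀ i, X i)}
    (hP : iIndepFun (fun i ω ↦ ω i) P) {A : Set (∀ i, X i)} (hA : MeasurableSet A)
    (hdep : ∀ S : Set ι, S.Finite → DependsOn (· ∈ A) Sᶜ) : P A = 0 ∨ P A = 1 := by
  have htail : MeasurableSet[limsup (fun i ↦ MeasurableSpace.comap
      (fun ω : ∀ i, X i ↦ ω i) inferInstance) cofinite] A := by
    rw [limsup_eq_iInf_iSup]
    simp only [MeasurableSpace.measurableSet_iInf]
    intro S hS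
    exact measurableSet_cylinderEvents_of_dependsOn hA (compl_compl S ▸ hdep Sᶜ hS)
  exact measure_zero_or_one_of_measurableSet_limsup (fun i ↦ (measurable_pi_apply i).comap_le) hP
    (fun _ hS ↦ Set.Finite.compl_mem_cofinite hS)
    (Monotone.directed_le fun _ _ ↦ Finset.coe_subset.2) Finset.finite_toSet
    (fun i ↦ ⟨{i}, by simp⟩) htail

end ProductMeasure

lemma measurableSet_image_fst_of_isClosed {X Y ι : Type*} [TopologicalSpace X] [MeasurableSpace X]
    [OpensMeasurableSpace X] [TopologicalSpace Y] [Countable ι] {C : Set (X × Y)} (hC : IsClosed C)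
    {K : ι → Set Y} (hK : ∀ i, IsCompact (K i)) (hCK : ∀ z ∈ C, ∃ i, z.2 ∈ K i) :
    MeasurableSet (Prod.fst '' C) := by
  have hunion : Prod.fst '' C = ⋃ i, Prod.fst '' ((Prod.map id (↑) : X × K i → X × Y) ⁻¹' C) := by
    ext x
    simp only [Set.mem_image, Set.mem_iUnion, Set.mem_preimage]
    constructor
    · rintro ⟨z, hz, rfl⟩
      obtain ⟨i, hi⟩ := hCK z hz
      exact ⟨i, (z.1, ⟨z.2, hi⟩), hz, rfl⟩
    · rintro ⟨i, z, hz, rfl⟩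
      exact ⟨_, hz, rfl⟩
  rw [hunion]
  refine MeasurableSet.iUnion fun i ↦ IsClosed.measurableSet ?_
  have := isCompact_iff_compactSpace.1 (hK i)
  exact isClosedMap_fst_of_compactSpace _
    (hC.preimage (continuous_id.prodMap continuous_subtype_val))

lemma abs_sub_le_abs_sub_of_abs_succ_sub_le_one {f : ℤ → ℤ} (hf : ∀ n, |f (n + 1) - f n| ≤ 1)
    (m n : ℤ) : |f m - f n| ≤ |m - n| := by
  have hmono : Monotone fun n ↦ f n + n := monotone_int_of_le_succ fun n ↦ by
    linarith [(abs_le.1 (hf n)).1]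
  have hanti : Antitone fun n ↦ f n - n := antitone_int_of_succ_le fun n ↦ by
    linarith [(abs_le.1 (hf n)).2]
  wlog hnm : n ≤ m generalizing m n
  · rw [abs_sub_comm (f m), abs_sub_comm m]
    exact this n m (le_of_not_ge hnm)
  rw [abs_of_nonneg (sub_nonneg.2 hnm), abs_le]
  constructor <;> linarith [hmono hnm, hanti hnm]

section Surface

variable {d : ℕ} {g F : (Fin d → ℤ) → ℤ}

namespace IsLipschitzFn

lemma abs_update_sub_update_le (hF : IsLipschitzFn F) (x : Fin d → ℤ) (i : Fin d) (m n : ℤ) :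
    |F (Function.update x i m) - F (Function.update x i n)| ≤ |m - n| := by
  refine abs_sub_le_abs_sub_of_abs_succ_sub_le_one (f := F ∘ Function.update x i)
    (fun k ↦ hF _ _ ?_) m n
  rw [Fintype.sum_eq_single i fun j hj ↦ by simp [hj]]
  simp

lemma abs_sub_le_sum (hF : IsLipschitzFn F) (x y : Fin d → ℤ) :
    |F x - F y| ≤ ∑ i, |x i - y i| := by
  have hpartial (s : Finset (Fin d)) : |F (s.piecewise x y) - F y| ≤ ∑ i ∈ s, |x i - y i| := by
    induction s using Finset.induction_on with
    | empty => simp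
    | insert i s hi ih =>
      set z := s.piecewise x y
      have hz : Function.update z i (y i) = z := by simp [z, hi]
      calc |F ((insert i s).piecewise x y) - F y|
          = |F (Function.update z i (x i)) - F y| := by rw [s.piecewise_insert]
        _ ≤ |F (Function.update z i (x i)) - F z| + |F z - F y| := abs_sub_le _ _ _
        _ ≤ |x i - y i| + ∑ j ∈ s, |x j - y j| :=
            add_le_add (by simpa [hz] using hF.abs_update_sub_update_le z i (x i) (y i)) ih
        _ = ∑ j ∈ insert i s, |x j - y j| := by rw [Finset.sum_insert hi]
  simpa using hpartial Finset.univ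

end IsLipschitzFn

lemma isClosed_setOf_isLipschitzFn : IsClosed {F : (Fin d → ℤ) → ℤ | IsLipschitzFn F} := by
  simp only [IsLipschitzFn, Set.ofPred_forall]
  exact isClosed_iInter fun x ↦ isClosed_iInter fun y ↦ isClosed_iInter fun _ ↦
    isClosed_le (by fun_prop) continuous_const

/-- `F` is an open Lipschitz surface of `ω` lying strictly above the graph of `g`. Allowing an
arbitrary `g` in place of the tilted plane makes the notion stable under vertical translation. -/
def IsOpenSurfaceAbove (ω : Config d) (g F : (Fin d → ℤ) → ℤ) : Prop :=
  IsLipschitzFn F ∧ ∀ x : Fin d → ℤ, ω (Fin.snoc x (F x)) = true ∧ g x < F x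

/-- The event that there is an open Lipschitz surface lying strictly above the graph of `g`; for
`g = planeHt α η` it is `LIP α η`. -/
def lipschitzAbove (g : (Fin d → ℤ) → ℤ) : Set (Config d) :=
  {ω | ∃ F, IsOpenSurfaceAbove ω g F}

lemma lipschitzAbove_antitone : Antitone (lipschitzAbove (d := d)) :=
  fun _ _ hg _ ⟨F, hF, h⟩ ↦ ⟨F, hF, fun x ↦ ⟨(h x).1, (hg x).trans_lt (h x).2⟩⟩

lemma isClosed_setOf_isOpenSurfaceAbove (g : (Fin d → ℤ) → ℤ) :
    IsClosed {q : Config d × ((Fin d → ℤ) → ℤ) | IsOpenSurfaceAbove q.1 g q.2} := by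
  simp only [IsOpenSurfaceAbove, Set.ofPred_and, Set.ofPred_forall]
  refine (isClosed_setOf_isLipschitzFn.preimage continuous_snd).inter
    (isClosed_iInter fun x ↦ IsClosed.inter ?_ ?_)
  · have heval : Continuous fun z : Config d × ℤ ↦ z.1 (Fin.snoc x z.2) :=
      continuous_prod_of_discrete_right.2 fun n ↦ continuous_apply (Fin.snoc x n : Site d)
    have hsite : Continuous fun q : Config d × ((Fin d → ℤ) → ℤ) ↦ (q.1, q.2 x) := by fun_prop
    exact isClosed_eq (heval.comp hsite) continuous_const
  · exact (isClosed_discrete (Set.Ioi (g x))).preimage (by fun_prop)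

lemma measurableSet_lipschitzAbove (g : (Fin d → ℤ) → ℤ) : MeasurableSet (lipschitzAbove g) := by
  have himage : lipschitzAbove g =
      Prod.fst '' {q : Config d × ((Fin d → ℤ) → ℤ) | IsOpenSurfaceAbove q.1 g q.2} := by
    ext ω
    simp [lipschitzAbove]
  rw [himage]
  -- The Lipschitz functions with a prescribed value at the origin lie in a compact box.
  refine measurableSet_image_fst_of_isClosed (isClosed_setOf_isOpenSurfaceAbove g)
    (K := fun h : ℤ ↦ Set.univ.pi fun x ↦ Metric.closedBall h (∑ i, |x i| : ℤ))
    (fun h ↦ isCompact_univ_pi fun x ↦ isCompact_closedBall _ _) fun q hq ↦ ⟨q.2 0, fun x _ ↦ ?_⟩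
  have hbound : |q.2 x - q.2 0| ≤ ∑ i, |x i| := by simpa using hq.1.abs_sub_le_sum x 0
  rw [Metric.mem_closedBall, Int.dist_eq]
  exact_mod_cast hbound

/-- Translation of `ℤ^{d+1}` by `n` in the last coordinate. -/
def verticalShift (n : ℤ) (y : Site d) : Site d := y + Pi.single (Fin.last d) n

lemma verticalShift_injective (n : ℤ) : Function.Injective (verticalShift (d := d) n) :=
  add_left_injective _

lemma verticalShift_snoc (n m : ℤ) (x : Fin d → ℤ) :
    verticalShift n (Fin.snoc x m : Site d) = Fin.snoc x (m + n) := by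
  funext i
  cases i using Fin.lastCases <;> simp [verticalShift, Fin.castSucc_ne_last]

lemma isOpenSurfaceAbove_comp_verticalShift_iff {ω : Config d} (n : ℤ) :
    IsOpenSurfaceAbove (ω ∘ verticalShift n) g F ↔
      IsOpenSurfaceAbove ω (fun x ↦ g x + n) (fun x ↦ F x + n) := by
  simp [IsOpenSurfaceAbove, IsLipschitzFn, verticalShift_snoc]

lemma comp_verticalShift_mem_lipschitzAbove_iff {ω : Config d} (n : ℤ) :
    ω ∘ verticalShift n ∈ lipschitzAbove g ↔ ω ∈ lipschitzAbove fun x ↦ g x + n :=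
  (Equiv.addRight fun _ ↦ n).exists_congr fun _ ↦
    isOpenSurfaceAbove_comp_verticalShift_iff n

lemma infinitePi_lipschitzAbove_add (μ : Measure Bool) [IsProbabilityMeasure μ]
    (g : (Fin d → ℤ) → ℤ) (n : ℤ) :
    Measure.infinitePi (fun _ : Site d ↦ μ) (lipschitzAbove fun x ↦ g x + n) =
      Measure.infinitePi (fun _ : Site d ↦ μ) (lipschitzAbove g) := by
  have hshift : MeasurePreserving (fun ω : Config d ↦ ω ∘ verticalShift n)
      (Measure.infinitePi fun _ ↦ μ) (Measure.infinitePi fun _ ↦ μ) :=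
    ⟨by fun_prop, Measure.map_infinitePi_infinitePi_of_inj (verticalShift_injective n)⟩
  rw [← hshift.measure_preimage (measurableSet_lipschitzAbove g).nullMeasurableSet]
  exact congrArg _ (Set.ext fun ω ↦ (comp_verticalShift_mem_lipschitzAbove_iff n).symm)

lemma infinitePi_iInter_lipschitzAbove (μ : Measure Bool) [IsProbabilityMeasure μ]
    (g : (Fin d → ℤ) → ℤ) :
    Measure.infinitePi (fun _ : Site d ↦ μ) (⋂ n : ℕ, lipschitzAbove fun x ↦ g x + n) =
      Measure.infinitePi (fun _ : Site d ↦ μ) (lipschitzAbove g) := by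
  have hanti : Antitone fun n : ℕ ↦ lipschitzAbove fun x ↦ g x + n := fun m n hmn ↦
    lipschitzAbove_antitone fun x ↦ by gcongr
  rw [hanti.measure_iInter (fun n ↦ (measurableSet_lipschitzAbove _).nullMeasurableSet)
    ⟨0, measure_ne_top _ _⟩]
  exact (iInf_congr fun n : ℕ ↦ infinitePi_lipschitzAbove_add μ g n).trans ciInf_const

lemma IsOpenSurfaceAbove.congr {ω ω' : Config d} (hF : IsOpenSurfaceAbove ω g F)
    (h : ∀ y : Site d, g (Fin.init y) < y (Fin.last d) → ω y = ω' y) :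
    IsOpenSurfaceAbove ω' g F :=
  ⟨hF.1, fun x ↦ ⟨(h _ (by simpa using (hF.2 x).2)).symm.trans (hF.2 x).1, (hF.2 x).2⟩⟩

lemma mem_iInter_lipschitzAbove_of_eqOn_compl_finite {S : Set (Site d)} (hS : S.Finite)
    {ω ω' : Config d} (hωω' : Set.EqOn ω ω' Sᶜ)
    (hω : ω ∈ ⋂ n : ℕ, lipschitzAbove fun x ↦ g x + n) :
    ω' ∈ ⋂ n : ℕ, lipschitzAbove fun x ↦ g x + n := by
  obtain ⟨b, hb⟩ := (hS.image fun y ↦ y (Fin.last d) - g (Fin.init y)).bddAbove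
  refine Set.mem_iInter.2 fun n ↦ ?_
  obtain ⟨F, hF⟩ := Set.mem_iInter.1 hω (max n b.toNat)
  have hF' : IsOpenSurfaceAbove ω' (fun x ↦ g x + (max n b.toNat : ℕ)) F := by
    refine hF.congr fun y hy ↦ hωω' fun hyS ↦ ?_
    have hyb : y (Fin.last d) - g (Fin.init y) ≤ b := hb ⟨y, hyS, rfl⟩
    omega
  exact lipschitzAbove_antitone (fun x ↦ by gcongr; exact le_max_left _ _) ⟨F, hF'⟩

lemma dependsOn_mem_iInter_lipschitzAbove (g : (Fin d → ℤ) → ℤ) {S : Set (Site d)}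
    (hS : S.Finite) : DependsOn (· ∈ ⋂ n : ℕ, lipschitzAbove fun x ↦ g x + n) Sᶜ :=
  fun _ _ h ↦ propext ⟨mem_iInter_lipschitzAbove_of_eqOn_compl_finite hS h,
    mem_iInter_lipschitzAbove_of_eqOn_compl_finite hS (Set.EqOn.symm h)⟩

end Surface

theorem zero_one_law_LIP_general {d : ℕ} (μ : Measure Bool) [IsProbabilityMeasure μ]
    (g : (Fin d → ℤ) → ℤ) :
    Measure.infinitePi (fun _ : Site d ↦ μ) (lipschitzAbove g) = 0 ∨
      Measure.infinitePi (fun _ : Site d ↦ μ) (lipschitzAbove g) = 1 := by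
  rw [← infinitePi_iInter_lipschitzAbove]
  exact measure_zero_or_one_of_dependsOn_compl_finite
    (iIndepFun_infinitePi (X := fun _ ↦ id) fun _ ↦ measurable_id)
    (MeasurableSet.iInter fun _ ↦ measurableSet_lipschitzAbove _)
    fun _ ↦ dependsOn_mem_iInter_lipschitzAbove g

/-- Zero-one law: for every `p`, the probability of existence of an open
Lipschitz surface above the tilted plane `L^{α,d}_η` is either `0` or `1`. -/
theorem zero_one_law_LIP
    {d : ℕ} (hd : 1 ≤ d) (α : ℝ) (hα : α ∈ Set.Ico (0 : ℝ) 1)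
    (η : Fin d → ℤ) (hη : IsSign η)
    (p : ℝ) (hp : p ∈ Set.Icc (0 : ℝ) 1)
    (P : Measure (Config d)) (hP : IsBernoulli p P) :
    P (LIP α η) = 0 ∨ P (LIP α η) = 1 := by
  rw [hP.eq_infinitePi hp]
  exact zero_one_law_LIP_general _ _
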